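/- Let X ⊂ ℝ^d be a finite set of arms, θ*, θ̂ ∈ ℝ^d with x* = argmax_{x∈X} x^⊤θ* and Δ_min = min_{x≠x*}(x*−x)^⊤θ* > 0, let A be a positive definite d×d matrix, and let c > 0, ℓ > 0. Assume the confidence event: |(x−x')^⊤(θ̂ − θ*)| ≤ c ||x−x'||_{A^{-1}} √ℓ for all x, x' ∈ X. If 16 c² ℓ · max_{x''∈X} x''^⊤ A^{-1} x'' ≤ Δ_min², then the empirical stopping condition holds at x*: for every x' ∈ X, c ||x*−x'||_{A^{-1}} √ℓ ≤ (x*−x')^⊤θ̂. -/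

import Mathlib

/-! Write `w = c ‖x* - x'‖_{A⁻¹} √ℓ`. The parallelogram law for the quadratic form of `A⁻¹` gives
`‖x* - x'‖² ≤ 2‖x*‖² + 2‖x'‖²`, so the accuracy hypothesis at `x*` and at `x'` yields
`4 w² ≤ Δmin²`, i.e. `2 w ≤ Δmin`. On the confidence event the empirical gap differs from the true
gap by at most `w`, hence it is at least `Δmin - w ≥ w`. The case `x' = x*` is `0 ≤ 0`. -/

open Matrix

/-- Half of the parallelogram law: the term at `u + v` is dropped because it is nonnegative. -/
lemma quadForm_sub_le {d : ℕ} {M : Matrix (Fin d) (Fin d) ℝ} (hM : M.PosSemidef)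
    (u v : Fin d → ℝ) :
    (u - v) ⬝ᵥ (M *ᵥ (u - v)) ≤ 2 * (u ⬝ᵥ (M *ᵥ u)) + 2 * (v ⬝ᵥ (M *ᵥ v)) := by
  have h : 0 ≤ (u + v) ⬝ᵥ (M *ᵥ (u + v)) := by
    simpa using hM.dotProduct_mulVec_nonneg (u + v)
  simp only [mulVec_add, mulVec_sub, dotProduct_add, dotProduct_sub, add_dotProduct,
    sub_dotProduct] at h ⊢
  linarith

/-- If the confidence event holds for all pairs of arms and the accuracy
`16 c² ℓ · max_{x''} x''ᵀA⁻¹x'' ≤ Δ_min²` is reached, then the empirical stopping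
condition is triggered at the best arm `x*`. -/
theorem statement15 {d : ℕ} (X : Finset (Fin d → ℝ))
    (θstar θhat xstar : Fin d → ℝ) (hxstar : xstar ∈ X)
    (hbest : ∀ x ∈ X, x ⬝ᵥ θstar ≤ xstar ⬝ᵥ θstar)
    (Δmin : ℝ)
    (hΔmin : IsLeast {g : ℝ | ∃ x ∈ X, x ≠ xstar ∧ g = (xstar - x) ⬝ᵥ θstar} Δmin)
    (hΔpos : 0 < Δmin)
    (A : Matrix (Fin d) (Fin d) ℝ) (hA : A.PosDef)
    (c ℓ : ℝ) (hc : 0 < c) (hℓ : 0 < ℓ)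
    (hconf : ∀ x ∈ X, ∀ x' ∈ X,
      |(x - x') ⬝ᵥ (θhat - θstar)| ≤
        c * Real.sqrt ((x - x') ⬝ᵥ (A⁻¹ *ᵥ (x - x'))) * Real.sqrt ℓ)
    (hacc : ∀ x'' ∈ X, 16 * c ^ 2 * ℓ * (x'' ⬝ᵥ (A⁻¹ *ᵥ x'')) ≤ Δmin ^ 2) :
    ∀ x' ∈ X,
      c * Real.sqrt ((xstar - x') ⬝ᵥ (A⁻¹ *ᵥ (xstar - x'))) * Real.sqrt ℓ ≤
        (xstar - x') ⬝ᵥ θhat := by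
  intro x' hx'
  by_cases hne : x' = xstar
  · simp [hne]
  have hgap : Δmin ≤ (xstar - x') ⬝ᵥ θstar := hΔmin.2 ⟨x', hx', hne, rfl⟩
  have hpsd : A⁻¹.PosSemidef := hA.inv.posSemidef
  have hnonneg : 0 ≤ (xstar - x') ⬝ᵥ (A⁻¹ *ᵥ (xstar - x')) := by
    simpa using hpsd.dotProduct_mulVec_nonneg (xstar - x')
  have hQ := quadForm_sub_le hpsd xstar x'
  have hconf' := (abs_le.mp (hconf xstar hxstar x' hx')).1
  rw [dotProduct_sub] at hconf'
  have h₁ := hacc xstar hxstar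
  have h₂ := hacc x' hx'
  set q := (xstar - x') ⬝ᵥ (A⁻¹ *ᵥ (xstar - x'))
  set w := c * Real.sqrt q * Real.sqrt ℓ with hw
  have hw_sq : w ^ 2 = c ^ 2 * ℓ * q := by
    rw [hw, mul_pow, mul_pow, Real.sq_sqrt hnonneg, Real.sq_sqrt hℓ.le]
    ring
  have hw_le : 2 * w ≤ Δmin := by
    have hmul := mul_le_mul_of_nonneg_left hQ (by positivity : 0 ≤ c ^ 2 * ℓ)
    refine abs_le_of_sq_le_sq' ?_ hΔpos.le |>.2
    linarith
  linarith
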